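/- arXiv:1710.10329 — 2 statements merged into one kernel-verified Lean document; each statement's English description precedes it below -/
import Mathlib

section
/- If g : ℝ^r → ℝ is G-Lipschitz, then its ball smoothing g_δ is differentiable with gradient ∇g_δ(y) = (r/δ) E_{v ∼ S^{r-1}}[g(y + δv) v], where S^{r-1} is the unit sphere in ℝ^r. -/
open MeasureTheory

/-- Ball smoothing operator: average of `g` over a Euclidean ball of radius `δ`. -/
noncomputable def ballSmooth {r : ℕ} (δ : ℝ) (g : EuclideanSpace ℝ (Fin r) → ℝ) :
    EuclideanSpace ℝ (Fin r) → ℝ :=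
  fun x => ⨍ v in Metric.closedBall (0 : EuclideanSpace ℝ (Fin r)) 1, g (x + δ • v)

/-!
Replace the indicator of the ball `B(0, R)` by a smooth radial cutoff `φ_ε(‖v‖)` falling from `1` to
`0` between the radii `R` and `R + ε`. The resulting integral of `g (y + v)` is a convolution with a
smooth kernel, so its gradient in `y` falls on the kernel; in polar coordinates this gradient is a
weighted mean, with total weight `-∫ φ_ε' = 1`, of the outward fluxes of `g` through the spheres
`∂B(y, s)` for `R ≤ s ≤ R + ε`. For continuous `g` the flux is jointly continuous in `(y, s)`, so
these gradients converge locally uniformly as `ε → 0`, and the gradient of the integral over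
`B(y, R)` is the flux through `∂B(y, R)`.

The flux is expressed through an arbitrary rotation-invariant probability measure on the sphere by
uniqueness of that measure: characteristic functions of rotation-invariant measures are radial, and
Fubini's theorem compares two of them.
-/

open Filter Metric Module Set Topology
open Real (smoothTransition)
open scoped Convolution Gradient Pointwise

section RotationInvariant

variable {E : Type*} [NormedAddCommGroup E] [InnerProductSpace ℝ E] [MeasurableSpace E]

/-- `μ` is invariant under every linear isometry, reflections included. A probability measure with
this property that is carried by the unit sphere is the uniform distribution on the sphere. -/
def RotationInvariant (μ : Measure E) : Prop :=
  ∀ R : E ≃ₗᵢ[ℝ] E, μ.map R = μ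

variable [BorelSpace E] {μ ν : Measure E}

theorem RotationInvariant.charFun_eq_of_norm_eq (hμ : RotationInvariant μ) {s t : E}
    (h : ‖s‖ = ‖t‖) : charFun μ s = charFun μ t := by
  let R : E ≃ₗᵢ[ℝ] E := (Submodule.span ℝ {s - t})ᗮ.reflection
  have hR : R s = t := Submodule.reflection_sub h
  have h_emb : MeasurableEmbedding R := R.toHomeomorph.measurableEmbedding
  calc charFun μ s = charFun (μ.map R) (R s) := by
        simp only [charFun_apply, h_emb.integral_map, R.inner_map_map]
    _ = charFun μ t := by rw [hμ R, hR]

theorem RotationInvariant.integral_charFun_smul [IsFiniteMeasure ν] (hμ : RotationInvariant μ)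
    (hν : ∀ᵐ x ∂ν, ‖x‖ = 1) (t : E) :
    ∫ x, charFun μ (‖t‖ • x) ∂ν = ν.real univ • charFun μ t := by
  rw [← integral_const]
  refine integral_congr_ae (hν.mono fun x hx => hμ.charFun_eq_of_norm_eq ?_)
  rw [norm_smul, norm_norm, hx, mul_one]

theorem integral_charFun_smul_comm [SecondCountableTopology E] [IsFiniteMeasure μ]
    [IsFiniteMeasure ν] (a : ℝ) :
    ∫ x, charFun μ (a • x) ∂ν = ∫ x, charFun ν (a • x) ∂μ := by
  simp only [charFun_apply]
  rw [integral_integral_swap]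
  · simp only [inner_smul_right, real_inner_comm]
  · refine Integrable.of_bound (C := 1) (Continuous.aestronglyMeasurable ?_)
      (.of_forall fun z => ?_)
    · simp only [Function.uncurry_def]
      fun_prop
    · simp only [Function.uncurry_def, Complex.norm_exp_ofReal_mul_I, le_refl]

variable [FiniteDimensional ℝ E]

theorem RotationInvariant.measure_univ_smul_comm [IsFiniteMeasure μ] [IsFiniteMeasure ν]
    (hμ : RotationInvariant μ) (hν : RotationInvariant ν) (hμ_norm : ∀ᵐ x ∂μ, ‖x‖ = 1)
    (hν_norm : ∀ᵐ x ∂ν, ‖x‖ = 1) : ν univ • μ = μ univ • ν := by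
  have : IsFiniteMeasure (ν univ • μ) := μ.smul_finite (measure_ne_top ν _)
  have : IsFiniteMeasure (μ univ • ν) := ν.smul_finite (measure_ne_top μ _)
  refine Measure.ext_of_charFun (funext fun t => ?_)
  calc charFun (ν univ • μ) t = ν.real univ • charFun μ t := integral_smul_measure _ _
    _ = ∫ x, charFun μ (‖t‖ • x) ∂ν := (hμ.integral_charFun_smul hν_norm t).symm
    _ = ∫ x, charFun ν (‖t‖ • x) ∂μ := integral_charFun_smul_comm _
    _ = μ.real univ • charFun ν t := hν.integral_charFun_smul hμ_norm t
    _ = charFun (μ univ • ν) t := (integral_smul_measure _ _).symm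

theorem rotationInvariant_map_coe_toSphere :
    RotationInvariant
      ((volume : Measure E).toSphere.map ((↑) : sphere (0 : E) 1 → E)) := fun R => by
  have hR : Measurable R := R.continuous.measurable
  ext s hs
  rw [Measure.map_apply hR hs, Measure.map_apply measurable_subtype_coe (hR hs),
    Measure.map_apply measurable_subtype_coe hs,
    Measure.toSphere_apply' _ (measurable_subtype_coe (hR hs)),
    Measure.toSphere_apply' _ (measurable_subtype_coe hs),
    ← R.symm.measurePreserving.measure_preimage_emb R.symm.toHomeomorph.measurableEmbedding,
    ← R.image_eq_preimage_symm, ← image2_smul,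
    image_image2_distrib_right (f' := (· • ·)) (g' := R) fun a x => R.map_smul a x]
  have h_sphere : R ⁻¹' sphere (0 : E) 1 = sphere 0 1 := by simp
  simp only [Subtype.image_preimage_coe]
  nth_rw 1 [← h_sphere]
  rw [← preimage_inter, R.surjective.image_preimage, image2_smul]

theorem integral_toSphere_eq_smul_integral {F : Type*} [NormedAddCommGroup F] [NormedSpace ℝ F]
    {σ : Measure E} [IsProbabilityMeasure σ] (hσ : RotationInvariant σ)
    (hσ_norm : ∀ᵐ x ∂σ, ‖x‖ = 1) (f : E → F) :
    ∫ θ, f θ ∂(volume : Measure E).toSphere =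
      (finrank ℝ E * (volume : Measure E).real (ball 0 1)) • ∫ x, f x ∂σ := by
  have h_emb : MeasurableEmbedding ((↑) : sphere (0 : E) 1 → E) :=
    .subtype_coe isClosed_sphere.measurableSet
  have h_norm : ∀ᵐ x ∂(volume : Measure E).toSphere.map ((↑) : sphere (0 : E) 1 → E), ‖x‖ = 1 :=
    h_emb.ae_map_iff.2 (.of_forall norm_eq_of_mem_sphere)
  have h_eq := rotationInvariant_map_coe_toSphere.measure_univ_smul_comm hσ h_norm hσ_norm
  rw [measure_univ, one_smul, h_emb.map_apply, preimage_univ] at h_eq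
  rw [← h_emb.integral_map, h_eq, integral_smul_measure, ← measureReal_def,
    Measure.toSphere_real_apply_univ]

end RotationInvariant

section PolarCoordinates

theorem integral_volumeIoiPow {F : Type*} [NormedAddCommGroup F] [NormedSpace ℝ F] (n : ℕ)
    (f : ℝ → F) : ∫ t, f t ∂Measure.volumeIoiPow n = ∫ t in Ioi (0 : ℝ), t ^ n • f t := by
  simp only [Measure.volumeIoiPow, ENNReal.ofReal]
  rw [integral_withDensity_eq_integral_smul (measurable_subtype_coe.pow_const _).real_toNNReal,
    integral_subtype_comap measurableSet_Ioi fun t : ℝ => (t ^ n).toNNReal • f t]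
  refine setIntegral_congr_fun measurableSet_Ioi fun t ht => ?_
  simp only [NNReal.smul_def, Real.coe_toNNReal _ (pow_nonneg (le_of_lt ht) _)]

theorem integral_eq_integral_Ioi_toSphere {E F : Type*} [NormedAddCommGroup E] [NormedSpace ℝ E]
    [FiniteDimensional ℝ E] [Nontrivial E] [MeasurableSpace E] [BorelSpace E]
    [NormedAddCommGroup F] [NormedSpace ℝ F] (μ : Measure E) [μ.IsAddHaarMeasure]
    {f : E → F} (hf : Integrable f μ) :
    ∫ x, f x ∂μ =
      ∫ t in Ioi (0 : ℝ), t ^ (finrank ℝ E - 1) • ∫ θ, f (t • (θ : E)) ∂μ.toSphere := by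
  have h_emb := (homeomorphUnitSphereProd E).measurableEmbedding
  have h_mp := μ.measurePreserving_homeomorphUnitSphereProd
  have h_compl : MeasurableSet ({0}ᶜ : Set E) := (measurableSet_singleton 0).compl
  let k : sphere (0 : E) 1 × Ioi (0 : ℝ) → F := fun z => f (z.2.1 • z.1.1)
  have hk : k ∘ homeomorphUnitSphereProd E = f ∘ (↑) := funext fun x => by
    simp only [k, Function.comp_apply]
    rw [← homeomorphUnitSphereProd_symm_apply_coe, Homeomorph.symm_apply_apply]
  have h_int : Integrable k (μ.toSphere.prod (.volumeIoiPow (finrank ℝ E - 1))) := by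
    rw [← h_mp.integrable_comp_emb h_emb, hk]
    exact (integrableOn_iff_comap_subtypeVal h_compl).1 hf.integrableOn
  calc ∫ x, f x ∂μ = ∫ x : ({0}ᶜ : Set E), f x ∂μ.comap (↑) := by
        rw [integral_subtype_comap h_compl, restrict_compl_singleton]
    _ = ∫ z, k z ∂μ.toSphere.prod (.volumeIoiPow (finrank ℝ E - 1)) := by
        rw [← h_mp.integral_comp h_emb]
        exact congrArg (fun F => ∫ x, F x ∂μ.comap (↑)) hk.symm
    _ = ∫ t : Ioi (0 : ℝ), ∫ θ, f (t.1 • θ.1) ∂μ.toSphere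
          ∂(.volumeIoiPow (finrank ℝ E - 1)) := integral_prod_symm k h_int
    _ = ∫ t in Ioi (0 : ℝ), t ^ (finrank ℝ E - 1) • ∫ θ, f (t • (θ : E)) ∂μ.toSphere :=
        integral_volumeIoiPow _ fun t => ∫ θ, f (t • θ.1) ∂μ.toSphere

end PolarCoordinates

section Gradient

theorem convolution_lsmul_eq_integral_add {E F : Type*} [NormedAddCommGroup E]
    [MeasurableSpace E] [BorelSpace E] [NormedAddCommGroup F] [NormedSpace ℝ F]
    (μ : Measure E) [μ.IsAddLeftInvariant] [μ.IsNegInvariant] (g : E → ℝ) (w : E → F) (y : E) :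
    (g ⋆[.lsmul ℝ ℝ, μ] w) y = ∫ v, g (y + v) • w (-v) ∂μ := by
  rw [convolution_lsmul, ← integral_add_left_eq_self _ y]
  simp only [sub_add_cancel_left]

variable {E : Type*} [NormedAddCommGroup E] [InnerProductSpace ℝ E]

theorem contDiff_comp_norm {F : Type*} [NormedAddCommGroup F] [NormedSpace ℝ F] {n : WithTop ℕ∞}
    {φ : ℝ → F} (hφ : ContDiff ℝ n φ) (hφ0 : φ =ᶠ[𝓝 0] fun _ => φ 0) :
    ContDiff ℝ n fun v : E => φ ‖v‖ := by
  refine contDiff_iff_contDiffAt.2 fun v => ?_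
  rcases eq_or_ne v 0 with rfl | hv
  · exact contDiffAt_const.congr_of_eventuallyEq (tendsto_norm_zero.eventually hφ0)
  · exact hφ.contDiffAt.comp v (contDiffAt_norm ℝ hv)

theorem hasGradientAt_norm [CompleteSpace E] {v : E} (hv : v ≠ 0) :
    HasGradientAt (fun x : E => ‖x‖) (‖v‖⁻¹ • v) v := by
  have h := (hasStrictFDerivAt_norm_sq v).hasFDerivAt.sqrt (by simpa using hv)
  simp only [Real.sqrt_sq (norm_nonneg _)] at h
  refine hasGradientAt_iff_hasFDerivAt.2 (h.congr_fderiv ?_)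
  ext e
  simp only [one_div, mul_inv_rev, smul_apply, coe_innerSL_apply,
    nsmul_eq_mul, Nat.cast_ofNat, smul_eq_mul, map_smul, InnerProductSpace.toDual_apply_apply]
  field_simp

theorem hasGradientAt_comp_norm [CompleteSpace E] {φ : ℝ → ℝ} {φ' : ℝ} {v : E}
    (hφ : HasDerivAt φ φ' ‖v‖) (hv : v ≠ 0) :
    HasGradientAt (fun x : E => φ ‖x‖) ((φ' * ‖v‖⁻¹) • v) v := by
  refine hasGradientAt_iff_hasFDerivAt.2
    ((hφ.comp_hasFDerivAt v (hasGradientAt_norm hv).hasFDerivAt).congr_fderiv ?_)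
  simp [mul_smul]

theorem gradient_comp_norm_neg_smul [CompleteSpace E] {φ : ℝ → ℝ} {s : ℝ}
    (hφ : DifferentiableAt ℝ φ s) (hs : 0 < s) {θ : E} (hθ : ‖θ‖ = 1) :
    ∇ (fun v : E => φ ‖v‖) (-(s • θ)) = -(deriv φ s • θ) := by
  have h_norm : ‖-(s • θ)‖ = s := by
    rw [norm_neg, norm_smul, hθ, mul_one, Real.norm_of_nonneg hs.le]
  have h_ne : -(s • θ) ≠ 0 := norm_pos_iff.1 (hs.trans_eq h_norm.symm)
  have hφ' : HasDerivAt φ (deriv φ s) ‖-(s • θ)‖ := by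
    rw [h_norm]
    exact hφ.hasDerivAt
  rw [(hasGradientAt_comp_norm hφ' h_ne).gradient, h_norm, smul_neg, mul_smul,
    inv_smul_smul₀ hs.ne']

theorem continuous_gradient [CompleteSpace E] {w : E → ℝ} (hw : ContDiff ℝ 1 w) :
    Continuous (∇ w) :=
  (InnerProductSpace.toDual ℝ E).symm.continuous.comp (hw.continuous_fderiv one_ne_zero)

theorem hasCompactSupport_gradient [CompleteSpace E] {w : E → ℝ} (hw : HasCompactSupport w) :
    HasCompactSupport (∇ w) :=
  (hw.fderiv ℝ).comp_left (map_zero (InnerProductSpace.toDual ℝ E).symm)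

theorem hasGradientAt_convolution_right [FiniteDimensional ℝ E] [MeasurableSpace E] [BorelSpace E]
    {μ : Measure E} [SFinite μ] [μ.IsAddLeftInvariant] [μ.IsNegInvariant]
    {g w : E → ℝ} (hg : LocallyIntegrable g μ)
    (hw : ContDiff ℝ 1 w) (hw_supp : HasCompactSupport w) (y : E) :
    HasGradientAt (g ⋆[.lsmul ℝ ℝ, μ] w) ((g ⋆[.lsmul ℝ ℝ, μ] ∇ w) y) y := by
  have h_grad_int := (hasCompactSupport_gradient hw_supp).convolutionExists_right (.lsmul ℝ ℝ) hg
    (continuous_gradient hw) y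
  have h_fderiv_int := (hw_supp.fderiv ℝ).convolutionExists_right
    ((ContinuousLinearMap.lsmul ℝ ℝ).precompR E) hg (hw.continuous_fderiv one_ne_zero) y
  refine hasGradientAt_iff_hasFDerivAt.2
    ((hw_supp.hasFDerivAt_convolution_right (.lsmul ℝ ℝ) hg hw y).congr_fderiv ?_)
  ext e
  rw [convolution_def, ContinuousLinearMap.integral_apply h_fderiv_int,
    InnerProductSpace.toDual_apply_apply, real_inner_comm, convolution_def,
    ← integral_inner h_grad_int]
  simp [ContinuousLinearMap.precompR_apply, inner_smul_right, inner_gradient_right]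

theorem hasFDerivAt_of_tendsto_of_continuousAt {V W ι : Type*} [NormedAddCommGroup V]
    [NormedSpace ℝ V] [NormedAddCommGroup W] [NormedSpace ℝ W] [TopologicalSpace ι] {a : ι}
    {l : Filter ι} [NeBot l] (hl : l ≤ 𝓝 a) {f : ι → V → W} {f₀ : V → W} {f' : ι → V → V →L[ℝ] W}
    {x : V} (hf' : ContinuousAt (Function.uncurry f') (a, x))
    (hf : ∀ᶠ i in l, ∀ y, HasFDerivAt (f i) (f' i y) y)
    (hff₀ : ∀ y, Tendsto (fun i => f i y) l (𝓝 (f₀ y))) : HasFDerivAt f₀ (f' a x) x := by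
  have h_pair : Tendsto (fun y => (a, y)) (𝓝 x) (𝓝 (a, x)) :=
    tendsto_const_nhds.prodMk_nhds tendsto_id
  have h_slice : Tendsto (fun q : ι × V => f' a q.2) (l ×ˢ 𝓝 x) (𝓝 (f' a x)) :=
    hf'.tendsto.comp (h_pair.comp tendsto_snd)
  have h_joint : Tendsto (fun q : ι × V => f' q.1 q.2) (l ×ˢ 𝓝 x) (𝓝 (f' a x)) :=
    hf'.tendsto.mono_left ((prod_mono_left _ hl).trans_eq nhds_prod_eq.symm)
  have h_unif : TendstoUniformlyOnFilter f' (f' a) l (𝓝 x) :=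
    (h_slice.prodMk_nhds h_joint).mono_right (nhds_le_uniformity _)
  exact hasFDerivAt_of_tendstoUniformlyOnFilter h_unif
    ((hf.prod_inl (𝓝 x)).mono fun z hz => hz z.2) (.of_forall hff₀)

end Gradient

section Cutoff

theorem deriv_smoothTransition_of_nonpos {u : ℝ} (hu : u ≤ 0) : deriv smoothTransition u = 0 :=
  IsLocalMin.deriv_eq_zero <| .of_forall fun x => by
    rw [smoothTransition.zero_of_nonpos hu]
    exact smoothTransition.nonneg x

theorem deriv_smoothTransition_of_one_le {u : ℝ} (hu : 1 ≤ u) : deriv smoothTransition u = 0 :=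
  IsLocalMax.deriv_eq_zero <| .of_forall fun x => by
    rw [smoothTransition.one_of_one_le hu]
    exact smoothTransition.le_one x

theorem continuous_deriv_smoothTransition : Continuous (deriv smoothTransition) :=
  (smoothTransition.contDiff (n := 1)).continuous_deriv_one

theorem integral_deriv_smoothTransition : ∫ u in 0..1, deriv smoothTransition u = 1 := by
  rw [intervalIntegral.integral_deriv_eq_sub
    (fun u _ => (smoothTransition.contDiff (n := 1)).differentiable one_ne_zero u)
    (continuous_deriv_smoothTransition.intervalIntegrable 0 1)]
  simp

/-- For `ε > 0`, a smooth profile falling from `1` on `(-∞, R]` to `0` on `[R + ε, ∞)`, so that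
`v ↦ radialCutoff R ε ‖v‖` is a smooth approximation of the indicator of the ball of radius `R`. -/
noncomputable def radialCutoff (R ε s : ℝ) : ℝ :=
  1 - smoothTransition ((s - R) / ε)

variable {R ε s : ℝ}

theorem contDiff_radialCutoff {n : ℕ∞} : ContDiff ℝ n (radialCutoff R ε) :=
  contDiff_const.sub (smoothTransition.contDiff.comp (by fun_prop))

theorem radialCutoff_of_le (hε : 0 ≤ ε) (hs : s ≤ R) : radialCutoff R ε s = 1 := by
  rw [radialCutoff, smoothTransition.zero_of_nonpos
    (div_nonpos_of_nonpos_of_nonneg (sub_nonpos.2 hs) hε), sub_zero]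

theorem radialCutoff_of_add_le (hε : 0 < ε) (hs : R + ε ≤ s) : radialCutoff R ε s = 0 := by
  rw [radialCutoff, smoothTransition.one_of_one_le ((one_le_div hε).2 (by linarith)), sub_self]

theorem abs_radialCutoff_le_one : |radialCutoff R ε s| ≤ 1 := by
  have h_nonneg := smoothTransition.nonneg ((s - R) / ε)
  have h_le_one := smoothTransition.le_one ((s - R) / ε)
  rw [radialCutoff, abs_le]
  constructor <;> linarith

theorem tendsto_radialCutoff (R s : ℝ) :
    Tendsto (fun ε => radialCutoff R ε s) (𝓝[>] 0) (𝓝 ((Iic R).indicator 1 s)) := by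
  refine tendsto_const_nhds.congr' ?_
  rcases le_or_gt s R with hs | hs
  · filter_upwards [self_mem_nhdsWithin] with ε hε
    rw [radialCutoff_of_le (le_of_lt hε) hs, indicator_of_mem (mem_Iic.2 hs), Pi.one_apply]
  · filter_upwards [Ioo_mem_nhdsGT (sub_pos.2 hs)] with ε hε
    rw [radialCutoff_of_add_le hε.1 (by linarith [hε.2]), indicator_of_notMem (notMem_Iic.2 hs)]

theorem deriv_radialCutoff (R ε s : ℝ) :
    deriv (radialCutoff R ε) s = -(ε⁻¹ * deriv smoothTransition ((s - R) / ε)) := by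
  have h_outer : HasDerivAt smoothTransition _ ((s - R) / ε) :=
    ((smoothTransition.contDiff (n := 1)).differentiable one_ne_zero _).hasDerivAt
  have h_inner : HasDerivAt (fun s => (s - R) / ε) (1 / ε) s :=
    ((hasDerivAt_id s).sub_const R).div_const ε
  rw [mul_comm, ← one_div]
  exact ((h_outer.comp s h_inner).const_sub 1).deriv

theorem integral_deriv_radialCutoff_smul {F : Type*} [NormedAddCommGroup F] [NormedSpace ℝ F]
    (hR : 0 ≤ R) (hε : 0 < ε) (f : ℝ → F) :
    ∫ s in Ioi 0, deriv (radialCutoff R ε) s • f s =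
      -∫ u in 0..1, deriv smoothTransition u • f (R + ε * u) := by
  have h_zero : ∀ s ∈ Ioi (0 : ℝ) \ Ioc R (R + ε), deriv (radialCutoff R ε) s • f s = 0 := by
    intro s ⟨_, hs⟩
    have : deriv smoothTransition ((s - R) / ε) = 0 := by
      rcases le_or_gt s R with h | h
      · exact deriv_smoothTransition_of_nonpos
          (div_nonpos_of_nonpos_of_nonneg (sub_nonpos.2 h) hε.le)
      · have : R + ε < s := not_le.1 fun h' => hs ⟨h, h'⟩
        exact deriv_smoothTransition_of_one_le ((one_le_div hε).2 (by linarith))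
    rw [deriv_radialCutoff, this, mul_zero, neg_zero, zero_smul]
  calc ∫ s in Ioi 0, deriv (radialCutoff R ε) s • f s
      = ∫ s in R..R + ε, deriv (radialCutoff R ε) s • f s := by
        rw [setIntegral_eq_of_subset_of_forall_sdiff_eq_zero measurableSet_Ioi
          (Ioc_subset_Ioi_self.trans (Ioi_subset_Ioi hR)) h_zero,
          intervalIntegral.integral_of_le (by linarith)]
    _ = ε • ∫ u in 0..1, deriv (radialCutoff R ε) (R + ε * u) • f (R + ε * u) := by
        rw [intervalIntegral.smul_integral_comp_add_mul
          (fun s => deriv (radialCutoff R ε) s • f s), mul_zero, add_zero, mul_one]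
    _ = -∫ u in 0..1, deriv smoothTransition u • f (R + ε * u) := by
        rw [← intervalIntegral.integral_smul, ← intervalIntegral.integral_neg]
        refine intervalIntegral.integral_congr fun u _ => ?_
        simp only [deriv_radialCutoff, add_sub_cancel_left, mul_div_cancel_left₀ _ hε.ne',
          neg_smul, smul_neg, mul_smul, smul_inv_smul₀ hε.ne']

theorem tendsto_integral_mul_radialCutoff {E : Type*} [NormedAddCommGroup E] [ProperSpace E]
    [MeasurableSpace E] [OpensMeasurableSpace E] {μ : Measure E} {g : E → ℝ}
    (hg : LocallyIntegrable g μ) (R : ℝ) :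
    Tendsto (fun ε => ∫ v, g v * radialCutoff R ε ‖v‖ ∂μ) (𝓝[>] 0)
      (𝓝 (∫ v in closedBall 0 R, g v ∂μ)) := by
  have h_meas : AEStronglyMeasurable g μ := hg.aestronglyMeasurable
  rw [← integral_indicator measurableSet_closedBall]
  refine tendsto_integral_filter_of_dominated_convergence
    ((closedBall (0 : E) (R + 1)).indicator fun v => |g v|) (.of_forall fun ε => ?_) ?_ ?_ ?_
  · exact h_meas.mul ((contDiff_radialCutoff (n := 0)).continuous.comp
      continuous_norm).aestronglyMeasurable
  · filter_upwards [Ioc_mem_nhdsGT zero_lt_one] with ε hε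
    refine .of_forall fun v => ?_
    by_cases hv : v ∈ closedBall (0 : E) (R + 1)
    · rw [indicator_of_mem hv, Real.norm_eq_abs, abs_mul]
      exact mul_le_of_le_one_right (abs_nonneg _) abs_radialCutoff_le_one
    · rw [mem_closedBall_zero_iff, not_le] at hv
      rw [radialCutoff_of_add_le hε.1 (by linarith [hε.2]), mul_zero, norm_zero]
      exact indicator_nonneg (fun _ _ => abs_nonneg _) v
  · exact (integrable_indicator_iff measurableSet_closedBall).2
      (hg.integrableOn_isCompact (isCompact_closedBall _ _)).abs
  · refine .of_forall fun v => ?_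
    have h_ind : (closedBall (0 : E) R).indicator g v = g v * (Iic R).indicator 1 ‖v‖ := by
      by_cases hv : ‖v‖ ≤ R <;> simp [hv]
    rw [h_ind]
    exact (tendsto_radialCutoff R ‖v‖).const_mul (g v)

end Cutoff

section Flux

variable {E : Type*} [NormedAddCommGroup E] [InnerProductSpace ℝ E] [FiniteDimensional ℝ E]
  [MeasurableSpace E] [BorelSpace E] {g : E → ℝ}

/-- The outward flux `∫_{∂B(y, s)} g ν dS` through the sphere of radius `s > 0` about `y`, with the
integral pulled back to the unit sphere. -/
noncomputable def sphereFlux (g : E → ℝ) (y : E) (s : ℝ) : E :=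
  s ^ (finrank ℝ E - 1) •
    ∫ θ, g (y + s • (θ : E)) • (θ : E) ∂(volume : Measure E).toSphere

theorem continuous_sphereFlux (hg : Continuous g) :
    Continuous fun p : E × ℝ => sphereFlux g p.1 p.2 := by
  refine (continuous_snd.pow _).smul ?_
  have h := continuous_parametric_integral_of_continuous (μ := (volume : Measure E).toSphere)
    (f := fun (p : E × ℝ) (θ : sphere (0 : E) 1) => g (p.1 + p.2 • (θ : E)) • (θ : E))
    (by simp only [Function.uncurry_def]; fun_prop) isCompact_univ
  simpa only [Measure.restrict_univ] using h

theorem hasGradientAt_integral_radial [Nontrivial E] (hg : Continuous g) {φ : ℝ → ℝ}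
    (hφ : ContDiff ℝ 1 φ) (hφ0 : φ =ᶠ[𝓝 0] fun _ => φ 0)
    (hφ_supp : HasCompactSupport fun v : E => φ ‖v‖) (y : E) :
    HasGradientAt (fun y => ∫ v, g (y + v) * φ ‖v‖)
      (-∫ s in Ioi 0, deriv φ s • sphereFlux g y s) y := by
  let w : E → ℝ := fun v => φ ‖v‖
  have hw : ContDiff ℝ 1 w := contDiff_comp_norm hφ hφ0
  have h_conv : g ⋆[.lsmul ℝ ℝ, volume] w = fun y => ∫ v, g (y + v) * φ ‖v‖ := funext fun y => by
    simp only [convolution_lsmul_eq_integral_add, w, norm_neg, smul_eq_mul]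
  have h_int : Integrable fun v => g (y + v) • ∇ w (-v) :=
    ((hg.comp (by fun_prop)).smul
      ((continuous_gradient hw).comp continuous_neg)).integrable_of_hasCompactSupport
      ((hasCompactSupport_gradient hφ_supp).comp_homeomorph (.neg E)).smul_left
  have h_grad := hasGradientAt_convolution_right (μ := volume) hg.locallyIntegrable hw hφ_supp y
  rw [h_conv, convolution_lsmul_eq_integral_add] at h_grad
  convert h_grad using 1
  rw [integral_eq_integral_Ioi_toSphere volume h_int, ← integral_neg]
  refine setIntegral_congr_fun measurableSet_Ioi fun s hs => ?_
  have h_neg (θ : sphere (0 : E) 1) : ∇ w (-(s • (θ : E))) = -(deriv φ s • (θ : E)) :=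
    gradient_comp_norm_neg_smul (hφ.differentiable one_ne_zero s) hs (norm_eq_of_mem_sphere θ)
  simp only [h_neg, sphereFlux, smul_neg, integral_neg, smul_comm _ (deriv φ s), integral_smul]

theorem hasGradientAt_integral_mul_radialCutoff [Nontrivial E] (hg : Continuous g) {R ε : ℝ}
    (hR : 0 < R) (hε : 0 < ε) (y : E) :
    HasGradientAt (fun y => ∫ v, g (y + v) * radialCutoff R ε ‖v‖)
      (∫ u in 0..1, deriv smoothTransition u • sphereFlux g y (R + ε * u)) y := by
  have h_one : radialCutoff R ε =ᶠ[𝓝 0] fun _ => radialCutoff R ε 0 := by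
    filter_upwards [Iic_mem_nhds hR] with s hs
    rw [radialCutoff_of_le hε.le hs, radialCutoff_of_le hε.le hR.le]
  have h_supp : HasCompactSupport fun v : E => radialCutoff R ε ‖v‖ :=
    .intro (isCompact_closedBall 0 (R + ε)) fun v hv =>
      radialCutoff_of_add_le hε (by simpa using (not_le.1 (mem_closedBall_zero_iff.not.1 hv)).le)
  have h := hasGradientAt_integral_radial hg (contDiff_radialCutoff (n := 1)) h_one h_supp y
  rwa [integral_deriv_radialCutoff_smul hR.le hε, neg_neg] at h

theorem hasGradientAt_setIntegral_closedBall [Nontrivial E] (hg : Continuous g) {R : ℝ}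
    (hR : 0 < R) (y : E) :
    HasGradientAt (fun y => ∫ v in closedBall 0 R, g (y + v)) (sphereFlux g y R) y := by
  let Γ : ℝ → E → E := fun ε y => ∫ u in 0..1, deriv smoothTransition u • sphereFlux g y (R + ε * u)
  have hΓ : Continuous (Function.uncurry Γ) := by
    refine intervalIntegral.continuous_parametric_intervalIntegral_of_continuous' ?_ 0 1
    have h_arg : Continuous fun q : (ℝ × E) × ℝ => (q.1.2, R + q.1.1 * q.2) := by fun_prop
    exact (continuous_deriv_smoothTransition.comp continuous_snd).smul
      ((continuous_sphereFlux hg).comp h_arg)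
  have hΓ_zero : Γ 0 y = sphereFlux g y R := by
    simp only [Γ, zero_mul, add_zero, intervalIntegral.integral_smul_const,
      integral_deriv_smoothTransition, one_smul]
  rw [← hΓ_zero, hasGradientAt_iff_hasFDerivAt]
  refine hasFDerivAt_of_tendsto_of_continuousAt (l := 𝓝[>] 0) nhdsWithin_le_nhds
    (f := fun ε y => ∫ v, g (y + v) * radialCutoff R ε ‖v‖)
    (f' := fun ε y => InnerProductSpace.toDual ℝ E (Γ ε y))
    ((InnerProductSpace.toDual ℝ E).continuous.comp hΓ).continuousAt ?_ fun z => ?_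
  · filter_upwards [self_mem_nhdsWithin] with ε hε z
    exact hasGradientAt_integral_mul_radialCutoff hg hR hε z
  · exact tendsto_integral_mul_radialCutoff
      (hg.comp (continuous_const.add continuous_id)).locallyIntegrable R

end Flux

section BallAverage

variable {E : Type*} [NormedAddCommGroup E] [InnerProductSpace ℝ E] [FiniteDimensional ℝ E]
  [MeasurableSpace E] [BorelSpace E] {g : E → ℝ} {σ : Measure E} [IsProbabilityMeasure σ] {δ : ℝ}

theorem sphereFlux_eq_smul_integral (hσ : RotationInvariant σ) (hσ_norm : ∀ᵐ x ∂σ, ‖x‖ = 1)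
    (g : E → ℝ) (y : E) (s : ℝ) :
    sphereFlux g y s =
      (s ^ (finrank ℝ E - 1) * (finrank ℝ E * (volume : Measure E).real (ball 0 1))) •
        ∫ v, g (y + s • v) • v ∂σ := by
  rw [sphereFlux, integral_toSphere_eq_smul_integral hσ hσ_norm fun v => g (y + s • v) • v,
    smul_smul]

theorem setAverage_closedBall_comp_smul {E F : Type*} [NormedAddCommGroup E] [NormedSpace ℝ E]
    [FiniteDimensional ℝ E] [MeasurableSpace E] [BorelSpace E] (μ : Measure E)
    [μ.IsAddHaarMeasure] [NormedAddCommGroup F] [NormedSpace ℝ F] (hδ : 0 < δ) (f : E → F) :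
    ⨍ v in closedBall 0 1, f (δ • v) ∂μ =
      (μ.real (ball 0 1) * δ ^ finrank ℝ E)⁻¹ • ∫ v in closedBall 0 δ, f v ∂μ := by
  rw [setAverage_eq, measureReal_def, Measure.addHaar_unitClosedBall_eq_addHaar_unitBall,
    ← measureReal_def, Measure.setIntegral_comp_smul_of_pos μ f _ hδ,
    smul_unitClosedBall_of_nonneg hδ.le, smul_smul, mul_inv]

theorem stmt5_general (hδ : 0 < δ) (hg : Continuous g) (hσ_sphere : σ (sphere 0 1) = 1)
    (hσ : RotationInvariant σ) (y : E) :
    HasGradientAt (fun x => ⨍ v in closedBall (0 : E) 1, g (x + δ • v))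
      ((finrank ℝ E / δ) • ∫ v, g (y + δ • v) • v ∂σ) y := by
  have hσ_mem : ∀ᵐ x ∂σ, x ∈ sphere 0 1 :=
    (mem_ae_iff_prob_eq_one isClosed_sphere.measurableSet).2 hσ_sphere
  have hσ_norm : ∀ᵐ x ∂σ, ‖x‖ = 1 := hσ_mem.mono fun _ => mem_sphere_zero_iff_norm.1
  obtain ⟨x₀, hx₀⟩ := hσ_norm.exists
  have : Nontrivial E := ⟨x₀, 0, norm_ne_zero_iff.1 (hx₀ ▸ one_ne_zero)⟩
  have h_ball : (volume : Measure E).real (ball 0 1) ≠ 0 :=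
    (ENNReal.toReal_pos (measure_ball_pos _ _ one_pos).ne' measure_ball_lt_top.ne).ne'
  have h_coef : ((volume : Measure E).real (ball 0 1) * δ ^ finrank ℝ E)⁻¹ *
      (δ ^ (finrank ℝ E - 1) * (finrank ℝ E * (volume : Measure E).real (ball 0 1))) =
        finrank ℝ E / δ := by
    rw [← pow_sub_one_mul (finrank_pos (R := ℝ) (M := E)).ne' δ]
    field_simp
  have h_avg : (fun x => ⨍ v in closedBall (0 : E) 1, g (x + δ • v)) = fun x => _ :=
    funext fun x => setAverage_closedBall_comp_smul volume hδ fun v => g (x + v)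
  have h_grad := (hasGradientAt_setIntegral_closedBall hg hδ y).hasFDerivAt.fun_const_smul
    ((volume : Measure E).real (ball 0 1) * δ ^ finrank ℝ E)⁻¹
  rw [h_avg, ← h_coef, mul_smul, ← sphereFlux_eq_smul_integral hσ hσ_norm,
    hasGradientAt_iff_hasFDerivAt, map_smul]
  exact h_grad

theorem continuous_of_forall_abs_sub_le {V : Type*} [SeminormedAddCommGroup V] {g : V → ℝ} {G : ℝ}
    (hg : ∀ x y, |g x - g y| ≤ G * ‖x - y‖) : Continuous g := by
  refine (LipschitzWith.of_dist_le_mul (K := G.toNNReal) fun x y => ?_).continuous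
  rw [Real.dist_eq, dist_eq_norm]
  exact (hg x y).trans (mul_le_mul_of_nonneg_right (Real.le_coe_toNNReal G) (norm_nonneg _))

end BallAverage

/-- The ball smoothing of a `G`-Lipschitz function is differentiable, with gradient given by
the sphere-average formula `∇g_δ(y) = (r/δ) E_{v ∼ S^{r-1}}[g(y + δ v) v]`, where the
expectation is with respect to the uniform (i.e. rotation-invariant) probability
distribution `σ` on the unit sphere. -/
theorem stmt5 (r : ℕ) (G δ : ℝ) (hδ : 0 < δ)
    (g : EuclideanSpace ℝ (Fin r) → ℝ)
    (hg : ∀ x y, |g x - g y| ≤ G * ‖x - y‖)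
    (σ : Measure (EuclideanSpace ℝ (Fin r))) [IsProbabilityMeasure σ]
    (hσsphere : σ (Metric.sphere (0 : EuclideanSpace ℝ (Fin r)) 1) = 1)
    (hσinv : ∀ R : EuclideanSpace ℝ (Fin r) ≃ₗᵢ[ℝ] EuclideanSpace ℝ (Fin r), σ.map R = σ) :
    ∀ y, HasGradientAt (ballSmooth δ g)
      (((r : ℝ) / δ) • ∫ v, g (y + δ • v) • v ∂σ) y := by
  have h := stmt5_general hδ (continuous_of_forall_abs_sub_le hg) hσsphere hσinv
  rwa [finrank_euclideanSpace_fin] at h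
end

section
/- If g : ℝ^r → ℝ is G-Lipschitz with ball smoothing g_δ, then the gradient ∇g_δ is (rG/δ)-Lipschitz, i.e. ‖∇g_δ(x) − ∇g_δ(y)‖ ≤ (rG/δ)‖x − y‖ for all x, y. -/
open MeasureTheory

/-!
The value `g_δ x` is the mean of `g` over the ball `B(x, δ)`. By Rademacher's theorem a Lipschitz
`g` is differentiable almost everywhere, and dominated convergence makes the derivative of `g_δ` at
`x` the mean of `fderiv ℝ g` over `B(x, δ)`; this replaces the sphere formula for the gradient.
The integrand is bounded by `G`, so moving the centre from `x` to `y` changes its mean by at most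
`G` times the relative volume of the symmetric difference of the two balls. Both balls contain a
ball of radius `δ - ‖x - y‖ / 2` around the midpoint, and Bernoulli's inequality bounds each half of
the symmetric difference by `r ‖x - y‖ / (2δ)` times the volume of a ball.
-/

open Metric Module
open scoped NNReal

theorem closedBall_midpoint_subset_inter_closedBall {E : Type*} [SeminormedAddCommGroup E]
    [NormedSpace ℝ E] (a b : E) (ρ : ℝ) :
    closedBall (midpoint ℝ a b) (ρ - dist a b / 2) ⊆ closedBall a ρ ∩ closedBall b ρ := by
  refine Set.subset_inter (closedBall_subset_closedBall' ?_) (closedBall_subset_closedBall' ?_)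
  · rw [dist_midpoint_left, Real.norm_ofNat]
    linarith
  · rw [dist_midpoint_right, Real.norm_ofNat]
    linarith

theorem norm_setIntegral_sub_setIntegral_le {α F : Type*} [MeasurableSpace α] {μ : Measure α}
    [NormedAddCommGroup F] [NormedSpace ℝ F] {f : α → F} {C : ℝ} {s t : Set α}
    (hs : MeasurableSet s) (ht : MeasurableSet t) (hμs : μ s ≠ ⊤) (hμt : μ t ≠ ⊤)
    (hf : AEStronglyMeasurable f μ) (hC : ∀ᵐ x ∂μ, ‖f x‖ ≤ C) :
    ‖(∫ x in s, f x ∂μ) - ∫ x in t, f x ∂μ‖ ≤ C * (μ.real (s \ t) + μ.real (t \ s)) := by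
  have hint {u : Set α} (hu : μ u ≠ ⊤) : IntegrableOn f u μ :=
    Measure.integrableOn_of_bounded hu hf (ae_restrict_of_ae hC)
  have hnorm {u v : Set α} (hu : μ u ≠ ⊤) : ‖∫ x in u \ v, f x ∂μ‖ ≤ C * μ.real (u \ v) :=
    norm_setIntegral_le_of_norm_le_const_ae
      ((measure_mono Set.sdiff_subset).trans_lt hu.lt_top) (ae_restrict_of_ae hC)
  calc ‖(∫ x in s, f x ∂μ) - ∫ x in t, f x ∂μ‖
      = ‖(∫ x in s \ t, f x ∂μ) - ∫ x in t \ s, f x ∂μ‖ := by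
        rw [← integral_inter_add_sdiff ht (hint hμs),
          ← integral_inter_add_sdiff hs (hint hμt), Set.inter_comm,
          add_sub_add_left_eq_sub]
    _ ≤ C * μ.real (s \ t) + C * μ.real (t \ s) :=
        (norm_sub_le _ _).trans (add_le_add (hnorm hμs) (hnorm hμt))
    _ = C * (μ.real (s \ t) + μ.real (t \ s)) := (mul_add _ _ _).symm

/-- The mean of `f` over the closed ball of radius `ρ` around a variable centre; the paper's `g_δ`
is the case `ρ = δ` of Lebesgue measure. Taking the ball itself as the domain of integration, rather
than a rescaled unit ball, makes a translation of the argument a translation of the ball. -/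
noncomputable def closedBallAverage {E F : Type*} [PseudoMetricSpace E] [MeasurableSpace E]
    [NormedAddCommGroup F] [NormedSpace ℝ F] (μ : Measure E) (ρ : ℝ) (f : E → F) (x : E) : F :=
  ⨍ y in closedBall x ρ, f y ∂μ

section AddHaar

variable {E F : Type*} [NormedAddCommGroup E] [MeasurableSpace E] [BorelSpace E]
  (μ : Measure E) [μ.IsAddHaarMeasure] [NormedAddCommGroup F] [NormedSpace ℝ F] {ρ : ℝ}

theorem closedBallAverage_eq_smul_integral (f : E → F) (x : E) :
    closedBallAverage μ ρ f x = (μ.real (closedBall 0 ρ))⁻¹ • ∫ y in closedBall x ρ, f y ∂μ := by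
  rw [closedBallAverage, setAverage_eq, Measure.addHaar_real_closedBall_center]

theorem setIntegral_closedBall_eq_comp_add (f : E → F) (x : E) :
    ∫ y in closedBall x ρ, f y ∂μ = ∫ v in closedBall 0 ρ, f (x + v) ∂μ := by
  simpa using ((measurePreserving_add_left μ x).setIntegral_preimage_emb
    (measurableEmbedding_addLeft x) f (closedBall x ρ)).symm

variable [NormedSpace ℝ E] [FiniteDimensional ℝ E]

theorem one_sub_mul_measureReal_closedBall_le_inter (hρ : 0 < ρ) (a b : E) :
    (1 - finrank ℝ E * (dist a b / (2 * ρ))) * μ.real (closedBall a ρ) ≤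
      μ.real (closedBall a ρ ∩ closedBall b ρ) := by
  set t := dist a b / (2 * ρ) with ht
  rcases le_or_gt t 1 with ht1 | ht1
  · have hradius : ρ - dist a b / 2 = (1 - t) * ρ := by
      rw [ht]
      field_simp
    have bernoulli : 1 - finrank ℝ E * t ≤ (1 - t) ^ finrank ℝ E := by
      simpa only [mul_neg, ← sub_eq_add_neg] using
        one_add_mul_le_pow (a := -t) (by linarith) (finrank ℝ E)
    calc (1 - finrank ℝ E * t) * μ.real (closedBall a ρ)
        ≤ (1 - t) ^ finrank ℝ E * μ.real (closedBall a ρ) := by gcongr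
      _ = μ.real (closedBall (midpoint ℝ a b) (ρ - dist a b / 2)) := by
          rw [hradius, Measure.addHaar_real_closedBall' μ _ hρ.le,
            Measure.addHaar_real_closedBall' μ _ (mul_nonneg (sub_nonneg.2 ht1) hρ.le), mul_pow,
            mul_assoc]
      _ ≤ μ.real (closedBall a ρ ∩ closedBall b ρ) :=
          measureReal_mono (closedBall_midpoint_subset_inter_closedBall a b ρ)
            (measure_inter_lt_top_of_left_ne_top measure_closedBall_lt_top.ne).ne
  · have hab : a ≠ b := by
      rintro rfl
      simp only [ht, dist_self, zero_div] at ht1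
      linarith
    have : Nontrivial E := ⟨a, b, hab⟩
    have hdim : (1 : ℝ) ≤ finrank ℝ E := by exact_mod_cast finrank_pos (R := ℝ) (M := E)
    have hneg : 1 - finrank ℝ E * t ≤ 0 :=
      sub_nonpos.2 (one_le_mul_of_one_le_of_one_le hdim ht1.le)
    exact (mul_nonpos_of_nonpos_of_nonneg hneg measureReal_nonneg).trans measureReal_nonneg

theorem measureReal_closedBall_sdiff_closedBall_le (hρ : 0 < ρ) (a b : E) :
    μ.real (closedBall a ρ \ closedBall b ρ) ≤
      finrank ℝ E * (dist a b / (2 * ρ)) * μ.real (closedBall 0 ρ) := by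
  have hsplit := measureReal_inter_add_sdiff (μ := μ) (s := closedBall a ρ)
    (measurableSet_closedBall (x := b) (ε := ρ)) measure_closedBall_lt_top.ne
  have hinter := one_sub_mul_measureReal_closedBall_le_inter μ hρ a b
  rw [Measure.addHaar_real_closedBall_center μ a] at hsplit hinter
  linarith

theorem norm_closedBallAverage_sub_le (hρ : 0 < ρ) {f : E → F} {C : ℝ}
    (hf : AEStronglyMeasurable f μ) (hC : ∀ᵐ x ∂μ, ‖f x‖ ≤ C) (a b : E) :
    ‖closedBallAverage μ ρ f a - closedBallAverage μ ρ f b‖ ≤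
      finrank ℝ E * C / ρ * dist a b := by
  set V := μ.real (closedBall (0 : E) ρ)
  have hVpos : 0 < V :=
    ENNReal.toReal_pos (measure_closedBall_pos μ 0 hρ).ne' measure_closedBall_lt_top.ne
  have hC0 : 0 ≤ C := hC.exists.elim fun x hx => (norm_nonneg _).trans hx
  have hsdiff (c d : E) : μ.real (closedBall c ρ \ closedBall d ρ) ≤
      finrank ℝ E * (dist c d / (2 * ρ)) * V :=
    measureReal_closedBall_sdiff_closedBall_le μ hρ c d
  have hintegral : ‖(∫ y in closedBall a ρ, f y ∂μ) - ∫ y in closedBall b ρ, f y ∂μ‖ ≤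
      V * (finrank ℝ E * C / ρ * dist a b) :=
    calc _ ≤ C * (μ.real (closedBall a ρ \ closedBall b ρ) +
              μ.real (closedBall b ρ \ closedBall a ρ)) :=
          norm_setIntegral_sub_setIntegral_le measurableSet_closedBall measurableSet_closedBall
            measure_closedBall_lt_top.ne measure_closedBall_lt_top.ne hf hC
      _ ≤ C * (finrank ℝ E * (dist a b / (2 * ρ)) * V +
            finrank ℝ E * (dist b a / (2 * ρ)) * V) := by
          gcongr <;> exact hsdiff _ _
      _ = V * (finrank ℝ E * C / ρ * dist a b) := by
          rw [dist_comm b a]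
          field_simp
          ring
  rwa [closedBallAverage_eq_smul_integral, closedBallAverage_eq_smul_integral, ← smul_sub,
    norm_smul, norm_inv, Real.norm_of_nonneg hVpos.le, inv_mul_le_iff₀ hVpos]

theorem setAverage_closedBall_comp_add_smul (hρ : 0 < ρ) (f : E → F) (x : E) :
    ⨍ v in closedBall 0 1, f (x + ρ • v) ∂μ = closedBallAverage μ ρ f x := by
  rw [closedBallAverage_eq_smul_integral, setIntegral_closedBall_eq_comp_add, setAverage_eq,
    Measure.setIntegral_comp_smul_of_pos μ (fun v => f (x + v)) _ hρ,
    smul_unitClosedBall_of_nonneg hρ.le, smul_smul, Measure.addHaar_real_closedBall' μ 0 hρ.le,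
    mul_inv_rev]

variable [FiniteDimensional ℝ F]

variable {μ} in
theorem hasFDerivAt_integral_comp_add {K : ℝ≥0} {g : E → F} (hg : LipschitzWith K g)
    {ν : Measure E} [IsFiniteMeasure ν] (hν : ν ≪ μ) {x : E}
    (hint : Integrable (fun v => g (x + v)) ν) :
    HasFDerivAt (fun z => ∫ v, g (z + v) ∂ν) (∫ v, fderiv ℝ g (x + v) ∂ν) x := by
  have hdiff : ∀ᵐ v ∂ν, DifferentiableAt ℝ g (x + v) :=
    hν.ae_le ((measurePreserving_add_left μ x).quasiMeasurePreserving.ae hg.ae_differentiableAt)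
  have hlip (v : E) : LipschitzWith K fun z => g (z + v) := by
    simpa only [mul_one, Function.comp_def] using hg.comp (isometry_add_right v).lipschitz
  have hmeas (z : E) : AEStronglyMeasurable (fun v => g (z + v)) ν :=
    (hg.continuous.comp (continuous_const_add z)).aestronglyMeasurable
  have hmeas_fderiv : AEStronglyMeasurable (fun v => fderiv ℝ g (x + v)) ν :=
    ((measurable_fderiv ℝ g).comp (measurable_const_add x)).aestronglyMeasurable
  exact (hasFDerivAt_integral_of_dominated_loc_of_lip (bound := fun _ => (K : ℝ)) Filter.univ_mem
    (.of_forall hmeas) hint hmeas_fderiv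
    (.of_forall fun v => by simpa using hlip v)
    (integrable_const _)
    (hdiff.mono fun v hv => (hasFDerivAt_comp_add_right v).2 hv.hasFDerivAt)).2

theorem hasFDerivAt_closedBallAverage {K : ℝ≥0} {g : E → F} (hg : LipschitzWith K g) (x : E) :
    HasFDerivAt (closedBallAverage μ ρ g) (closedBallAverage μ ρ (fderiv ℝ g) x) x := by
  have hcont : Continuous fun v => g (x + v) := hg.continuous.comp (continuous_const_add x)
  have : IsFiniteMeasure (μ.restrict (closedBall 0 ρ)) :=
    isFiniteMeasure_restrict.2 measure_closedBall_lt_top.ne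
  have hint : IntegrableOn (fun v => g (x + v)) (closedBall 0 ρ) μ :=
    hcont.continuousOn.integrableOn_compact (isCompact_closedBall 0 ρ)
  have hderiv :=
    hasFDerivAt_integral_comp_add hg Measure.restrict_le_self.absolutelyContinuous hint
  have havg : closedBallAverage μ ρ g = fun z =>
      (μ.real (closedBall 0 ρ))⁻¹ • ∫ v in closedBall 0 ρ, g (z + v) ∂μ := by
    ext z
    rw [closedBallAverage_eq_smul_integral, setIntegral_closedBall_eq_comp_add]
  rw [havg, closedBallAverage_eq_smul_integral, setIntegral_closedBall_eq_comp_add]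
  exact hderiv.const_smul _

theorem stmt6_general {G : ℝ} (hρ : 0 < ρ) {g : E → F} (hg : ∀ x y, ‖g x - g y‖ ≤ G * ‖x - y‖)
    (x y : E) :
    ‖fderiv ℝ (closedBallAverage μ ρ g) x - fderiv ℝ (closedBallAverage μ ρ g) y‖ ≤
      finrank ℝ E * G / ρ * ‖x - y‖ := by
  rcases eq_or_ne x y with rfl | hxy
  · simp
  have hG : 0 ≤ G :=
    nonneg_of_mul_nonneg_left ((norm_nonneg _).trans (hg x y)) (norm_sub_pos_iff.2 hxy)
  lift G to ℝ≥0 using hG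
  have hlip : LipschitzWith G g := .of_dist_le_mul fun a b => by
    simpa only [dist_eq_norm] using hg a b
  rw [(hasFDerivAt_closedBallAverage μ hlip x).fderiv,
    (hasFDerivAt_closedBallAverage μ hlip y).fderiv, ← dist_eq_norm x y]
  exact norm_closedBallAverage_sub_le μ hρ (measurable_fderiv ℝ g).aestronglyMeasurable
    (.of_forall fun _ => norm_fderiv_le_of_lipschitz ℝ hlip) x y

end AddHaar

theorem ballSmooth_eq_closedBallAverage {r : ℕ} {δ : ℝ} (hδ : 0 < δ)
    (g : EuclideanSpace ℝ (Fin r) → ℝ) : ballSmooth δ g = closedBallAverage volume δ g :=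
  funext fun x => setAverage_closedBall_comp_add_smul volume hδ g x

theorem norm_gradient_sub_gradient {𝕜 E : Type*} [RCLike 𝕜] [NormedAddCommGroup E]
    [InnerProductSpace 𝕜 E] [CompleteSpace E] (f : E → 𝕜) (x y : E) :
    ‖gradient f x - gradient f y‖ = ‖fderiv 𝕜 f x - fderiv 𝕜 f y‖ := by
  rw [gradient, gradient, ← map_sub, LinearIsometryEquiv.norm_map]

/-- The gradient of the ball smoothing of a `G`-Lipschitz function is `(rG/δ)`-Lipschitz. -/
theorem stmt6 (r : ℕ) (G δ : ℝ) (hδ : 0 < δ)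
    (g : EuclideanSpace ℝ (Fin r) → ℝ)
    (hg : ∀ x y, |g x - g y| ≤ G * ‖x - y‖) :
    ∀ x y, ‖gradient (ballSmooth δ g) x - gradient (ballSmooth δ g) y‖ ≤
      (r : ℝ) * G / δ * ‖x - y‖ := by
  intro x y
  simpa only [norm_gradient_sub_gradient, ballSmooth_eq_closedBallAverage hδ,
    finrank_euclideanSpace_fin] using stmt6_general volume hδ hg x y
end
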